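/- For any bidirected graph G_τ and any vertex set X ⊆ V, the transitive closure of the switched graph equals the switched transitive closure: Ft(G_{τ_X}) = (Ft(G_τ))_{τ_X}. -/

import Mathlib

/-- A signed vertex `x^α` : a vertex together with a sign in `ℤˣ`. -/
abbrev SV (V : Type) := V × ℤˣ

/-- A dart : an ordered signed edge `(x^α, y^β)`, traversed from `x` (entered with
half-edge sign `α`) to `y` (left with half-edge sign `β`). -/
abbrev BDart (V : Type) := SV V × SV V

/-- A bidirected graph on the vertex set `V`, given as its set of (unordered) signed
edges `{x^α, y^β}`; the half-edge of such an edge at `x` has sign `α` and the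
half-edge at `y` has sign `β`. -/
abbrev BGraph (V : Type) := Set (Sym2 (SV V))

/-- `IsWalk G x l y` : the list of darts `l` forms a chain from `x` to `y` in `G`. -/
def IsWalk {V : Type} (G : BGraph V) : V → List (BDart V) → V → Prop
  | x, [], y => x = y
  | x, d :: l, y => d.1.1 = x ∧ Sym2.mk d.1 d.2 ∈ G ∧ IsWalk G d.2.1 l y

/-- `IsBWalk G x α l y β` : `l` is a b-walk from `x^α` to `y^β` : a nonempty chain
from `x` to `y` whose first half-edge sign at `x` is `α`, whose last half-edge sign
at `y` is `β`, and such that at every internal vertex occurrence the two incident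
half-edge signs sum to `0`. -/
def IsBWalk {V : Type} (G : BGraph V) (x : V) (α : ℤˣ) (l : List (BDart V)) (y : V)
    (β : ℤˣ) : Prop :=
  l ≠ [] ∧ IsWalk G x l y ∧ (∀ d ∈ l.head?, d.1.2 = α) ∧ (∀ d ∈ l.getLast?, d.2.2 = β) ∧
    List.Chain' (fun d d' => ((d.2.2 : ℤ) + (d'.1.2 : ℤ) = 0)) l

/-- `IsBPath G x α l y β` : `l` is a b-path from `x^α` to `y^β` : a b-walk from `x^α`
to `y^β` that is minimal, i.e. no proper subsequence of its darts, taken in the same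
order, is a b-walk from `x^α` to `y^β`. -/
def IsBPath {V : Type} (G : BGraph V) (x : V) (α : ℤˣ) (l : List (BDart V)) (y : V)
    (β : ℤˣ) : Prop :=
  IsBWalk G x α l y β ∧ ∀ l', l'.Sublist l → l' ≠ l → ¬ IsBWalk G x α l' y β

/-- The transitive closure `Ft G` : its edges are the edges `{x^α, y^β}` for which
`G` contains a b-path from `x^α` to `y^β`. -/
def Ft {V : Type} (G : BGraph V) : BGraph V :=
  {e | ∃ x α y β l, IsBPath G x α l y β ∧ e = Sym2.mk (x, α) (y, β)}

/-- The transitive closure `ft G H` of the partial graph `H` within `G` : the edges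
of `H` together with every edge `{x^α, y^β}` of `G` for which `H` contains a b-path
from `x^α` to `y^β`. -/
def ft {V : Type} (G H : BGraph V) : BGraph V :=
  H ∪ {e | e ∈ G ∧ ∃ x α y β l, IsBPath H x α l y β ∧ e = Sym2.mk (x, α) (y, β)}

/-- `IsTR G H` : `H` is a transitive reduction of `G` : a partial graph of `G`
minimal with the property `ft G H = G`. -/
def IsTR {V : Type} (G H : BGraph V) : Prop :=
  H ⊆ G ∧ ft G H = G ∧ ∀ H', H' ⊂ H → ft G H' ≠ G

open Classical in
/-- Switching a signed vertex : negate its sign exactly when the vertex is in `X`. -/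
noncomputable def swv {V : Type} (X : Set V) (p : SV V) : SV V :=
  if p.1 ∈ X then (p.1, -p.2) else p

/-- Switching a bidirected graph by a vertex set `X` : negate the sign of every
half-edge incident with a vertex of `X`. -/
noncomputable def switchB {V : Type} (X : Set V) (G : BGraph V) : BGraph V :=
  (Sym2.map (swv X)) '' G

theorem swv_fst {V : Type} (X : Set V) (p : SV V) : (swv X p).1 = p.1 := by
  unfold swv; split_ifs <;> rfl

theorem swv_swv {V : Type} (X : Set V) (p : SV V) : swv X (swv X p) = p := by
  by_cases h : p.1 ∈ X <;> simp [swv, h]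

theorem swv_neg {V : Type} (X : Set V) (x : V) (a : ℤˣ) :
    (swv X (x, -a)).2 = -(swv X (x, a)).2 := by
  by_cases h : x ∈ X <;> simp [swv, h]

theorem swv_eta {V : Type} (X : Set V) (x : V) (a : ℤˣ) :
    (x, (swv X (x, a)).2) = swv X (x, a) :=
  Prod.ext (swv_fst X (x, a)).symm rfl

theorem switchB_switchB {V : Type} (X : Set V) (G : BGraph V) :
    switchB X (switchB X G) = G := by
  have h : (swv X) ∘ (swv X) = id := funext (swv_swv X)
  unfold switchB
  rw [← Set.image_comp, ← Sym2.map_comp, h, Sym2.map_id, Set.image_id]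

theorem isBWalk_nil {V : Type} (G : BGraph V) (x : V) (a : ℤˣ) (y : V) (b : ℤˣ) :
    ¬ IsBWalk G x a [] y b := fun h => h.1 rfl

theorem unit_add_zero (a b : ℤˣ) : ((a : ℤ) + (b : ℤ) = 0) ↔ b = -a := by
  rcases Int.units_eq_one_or a with rfl | rfl <;>
    rcases Int.units_eq_one_or b with rfl | rfl <;> decide

theorem isBWalk_cons {V : Type} (G : BGraph V) (x : V) (a : ℤˣ) (d : BDart V)
    (l : List (BDart V)) (y : V) (b : ℤˣ) :
    IsBWalk G x a (d :: l) y b ↔ d.1 = (x, a) ∧ Sym2.mk d.1 d.2 ∈ G ∧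
      ((l = [] ∧ d.2 = (y, b)) ∨ IsBWalk G d.2.1 (-d.2.2) l y b) := by
  obtain ⟨⟨d1, d2⟩, ⟨d3, d4⟩⟩ := d
  cases l with
  | nil =>
    simp [IsBWalk, IsWalk, List.Chain']
    grind
  | cons e l =>
    obtain ⟨⟨e1, e2⟩, ⟨e3, e4⟩⟩ := e
    simp [IsBWalk, IsWalk, List.Chain', unit_add_zero]
    grind

/-- Switching a dart. -/
noncomputable def swd {V : Type} (X : Set V) (d : BDart V) : BDart V :=
  (swv X d.1, swv X d.2)

theorem swd_map {V : Type} (X : Set V) (l : List (BDart V)) :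
    (l.map (swd X)).map (swd X) = l := by
  have h : (swd X) ∘ (swd X) = id := by
    funext d
    simp [swd, swv_swv]
  rw [List.map_map, h, List.map_id]

theorem isBWalk_switch {V : Type} (X : Set V) (G : BGraph V) (y : V) (b : ℤˣ)
    (l : List (BDart V)) : ∀ (x : V) (a : ℤˣ), IsBWalk G x a l y b →
    IsBWalk (switchB X G) x (swv X (x, a)).2 (l.map (swd X)) y (swv X (y, b)).2 := by
  induction l with
  | nil => intro x a h; exact absurd h (isBWalk_nil _ _ _ _ _)
  | cons d l ih =>
    intro x a h
    rw [isBWalk_cons] at h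
    obtain ⟨h1, h2, h3⟩ := h
    rw [List.map_cons, isBWalk_cons]
    refine ⟨?_, ⟨_, h2, rfl⟩, ?_⟩
    · rw [swv_eta, ← h1]; rfl
    · rcases h3 with ⟨h3, h4⟩ | h3
      · left
        refine ⟨by simp [h3], ?_⟩
        rw [swv_eta, ← h4]; rfl
      · right
        have := ih _ _ h3
        rw [swv_neg] at this
        simpa [swd, swv_fst] using this

theorem isBWalk_unswitch {V : Type} (X : Set V) (G : BGraph V) (x : V) (a : ℤˣ) (y : V)
    (b : ℤˣ) (l : List (BDart V))
    (h : IsBWalk (switchB X G) x (swv X (x, a)).2 l y (swv X (y, b)).2) :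
    IsBWalk G x a (l.map (swd X)) y b := by
  have := isBWalk_switch X _ _ _ _ _ _ h
  simpa only [switchB_switchB, swv_eta, swv_swv] using this

theorem isBPath_switch {V : Type} (X : Set V) (G : BGraph V) (x : V) (a : ℤˣ) (y : V)
    (b : ℤˣ) (l : List (BDart V)) (h : IsBPath G x a l y b) :
    IsBPath (switchB X G) x (swv X (x, a)).2 (l.map (swd X)) y (swv X (y, b)).2 := by
  refine ⟨isBWalk_switch X _ _ _ _ _ _ h.1, fun l' hs hne hw => ?_⟩
  refine h.2 (l'.map (swd X)) ?_ ?_ (isBWalk_unswitch X _ _ _ _ _ _ hw)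
  · have := hs.map (swd X)
    rwa [swd_map] at this
  · intro he
    apply hne
    rw [← he, swd_map]

theorem switchB_Ft_subset {V : Type} (X : Set V) (G : BGraph V) :
    switchB X (Ft G) ⊆ Ft (switchB X G) := by
  rintro _ ⟨_, ⟨x, a, y, b, l, h, rfl⟩, rfl⟩
  refine ⟨x, _, y, _, _, isBPath_switch X _ _ _ _ _ _ h, ?_⟩
  rw [swv_eta, swv_eta]; rfl

/-- For any bidirected graph `G` and any vertex set `X`, the
transitive closure of the switched graph equals the switched transitive closure. -/
theorem stmt8 {V : Type} [Fintype V] (G : BGraph V) (X : Set V) :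
    Ft (switchB X G) = switchB X (Ft G) := by
  apply Set.Subset.antisymm _ (switchB_Ft_subset X G)
  have h := switchB_Ft_subset X (switchB X G)
  rw [switchB_switchB] at h
  have h2 : switchB X (switchB X (Ft (switchB X G))) ⊆ switchB X (Ft G) := Set.image_mono h
  rwa [switchB_switchB] at h2
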